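/- Let z* be a strong τ-stationary point for some τ > 0 with ‖z*‖₀ < s. Then z* is a global minimizer of ℓ over S: ℓ(z) ≥ ℓ(z*) for every z ∈ S. -/

import Mathlib

open scoped RealInnerProductSpace BigOperators
open Matrix

/-- The number of nonzero entries of a vector (the ℓ₀ "norm"). -/
noncomputable def norm0 {p : ℕ} (z : EuclideanSpace ℝ (Fin p)) : ℕ :=
  {i | z i ≠ 0}.ncard

/-- The Euclidean projection of `w` onto the sparse set `S = {x : ‖x‖₀ ≤ s}`:
the set of points of `S` nearest to `w`. -/
noncomputable def projS {p : ℕ} (s : ℕ) (w : EuclideanSpace ℝ (Fin p)) :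
    Set (EuclideanSpace ℝ (Fin p)) :=
  {x | norm0 x ≤ s ∧ ∀ x' : EuclideanSpace ℝ (Fin p), norm0 x' ≤ s → ‖w - x‖ ≤ ‖w - x'‖}

/-!
If `x` is a nearest `s`-sparse point to `w` and `x` has fewer than `s` nonzero entries, then setting
any single coordinate of `x` to that of `w` stays `s`-sparse, so optimality of `x` forces `x = w`.
For `w = z - τ • gradient f z` and `x = z` this says that the gradient vanishes at `z`, and a
critical point of a convex function is a global minimizer.
-/

theorem norm0_add_le {p : ℕ} (x y : EuclideanSpace ℝ (Fin p)) :
    norm0 (x + y) ≤ norm0 x + norm0 y :=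
  (Set.ncard_le_ncard (Function.support_add x y)).trans (Set.ncard_union_le _ _)

theorem norm0_single_le_one {p : ℕ} (j : Fin p) (c : ℝ) :
    norm0 (EuclideanSpace.single j c) ≤ 1 := by
  rw [← Set.ncard_singleton j]
  exact Set.ncard_le_ncard fun i hi => by simp_all

theorem norm_sub_single_apply_sq {𝕜 ι : Type*} [RCLike 𝕜] [Fintype ι] [DecidableEq ι]
    (v : EuclideanSpace 𝕜 ι) (j : ι) :
    ‖v - EuclideanSpace.single j (v j)‖ ^ 2 = ‖v‖ ^ 2 - ‖v j‖ ^ 2 := by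
  have hre : RCLike.re (v j * (starRingEnd 𝕜) (v j)) = ‖v j‖ ^ 2 := by
    rw [RCLike.mul_conj, ← RCLike.ofReal_pow, RCLike.ofReal_re]
  rw [norm_sub_sq (𝕜 := 𝕜), EuclideanSpace.inner_single_right, PiLp.norm_single, mul_comm, hre]
  ring

theorem eq_of_mem_projS_of_norm0_lt {p s : ℕ} {w x : EuclideanSpace ℝ (Fin p)}
    (hx : x ∈ projS s w) (hcard : norm0 x < s) : x = w := by
  ext j
  have hsparse : norm0 (x + EuclideanSpace.single j ((w - x) j)) ≤ s :=
    calc norm0 (x + EuclideanSpace.single j ((w - x) j))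
        ≤ norm0 x + norm0 (EuclideanSpace.single j ((w - x) j)) := norm0_add_le _ _
      _ ≤ norm0 x + 1 := by gcongr; exact norm0_single_le_one _ _
      _ ≤ s := hcard
  have hnorm : ‖w - x‖ ^ 2 ≤ ‖w - x‖ ^ 2 - ‖(w - x) j‖ ^ 2 := by
    rw [← norm_sub_single_apply_sq, sub_sub]
    gcongr
    exact hx.2 _ hsparse
  have hcoord : (w - x) j = 0 := by
    rw [← norm_eq_zero, ← sq_nonpos_iff]
    linarith
  exact (sub_eq_zero.mp hcoord).symm

theorem gradient_eq_zero_of_mem_projS {p s : ℕ} {f : EuclideanSpace ℝ (Fin p) → ℝ} {τ : ℝ}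
    (hτ : τ ≠ 0) {z : EuclideanSpace ℝ (Fin p)} (hz : z ∈ projS s (z - τ • gradient f z))
    (hcard : norm0 z < s) : gradient f z = 0 := by
  have hstep : τ • gradient f z = 0 :=
    sub_eq_self.mp (eq_of_mem_projS_of_norm0_lt hz hcard).symm
  exact (smul_eq_zero_iff_right hτ).mp hstep

theorem linearization_le_of_convexOn {E : Type*} [NormedAddCommGroup E] [NormedSpace ℝ E]
    {S : Set E} {f : E → ℝ} {f' : E →L[ℝ] ℝ} {x y : E} (hf : ConvexOn ℝ S f)
    (hf' : HasFDerivWithinAt f f' S x) (hx : x ∈ S) (hy : y ∈ S) :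
    f x + f' (y - x) ≤ f y := by
  let L : ℝ →ᵃ[ℝ] E := AffineMap.lineMap x y
  have hderiv : HasDerivWithinAt (f ∘ L) (f' (y - x)) (L ⁻¹' S) 0 :=
    hf'.comp_hasDerivWithinAt_of_eq 0 AffineMap.hasDerivWithinAt_lineMap
      (Set.mapsTo_preimage L S) (AffineMap.lineMap_apply_zero x y).symm
  have hslope : f' (y - x) ≤ slope (f ∘ L) 0 1 :=
    (hf.comp_affineMap L).le_slope_of_hasDerivWithinAt
      (by simpa [L] using hx) (by simpa [L] using hy) zero_lt_one hderiv
  simp only [slope_def_field, Function.comp_apply, L, AffineMap.lineMap_apply_zero,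
    AffineMap.lineMap_apply_one, sub_zero, div_one] at hslope
  linarith

theorem isMinOn_of_convexOn_of_gradient_eq_zero {E : Type*} [NormedAddCommGroup E]
    [InnerProductSpace ℝ E] [CompleteSpace E] {S : Set E} {f : E → ℝ} {x : E}
    (hf : ConvexOn ℝ S f) (hdiff : DifferentiableAt ℝ f x) (hgrad : gradient f x = 0)
    (hx : x ∈ S) : IsMinOn f S x := by
  have hderiv : HasFDerivAt f (0 : E →L[ℝ] ℝ) x := by
    simpa [hgrad] using hdiff.hasGradientAt.hasFDerivAt
  intro y hy
  simpa using linearization_le_of_convexOn hf hderiv.hasFDerivWithinAt hx hy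

theorem hasDerivAt_log_one_add_exp (t : ℝ) :
    HasDerivAt (fun t => Real.log (1 + Real.exp t)) (Real.sigmoid t) t := by
  convert ((Real.hasDerivAt_exp t).const_add 1).log (by positivity) using 1
  rw [Real.sigmoid_def, Real.exp_neg]
  field_simp
  ring

theorem differentiable_log_one_add_exp : Differentiable ℝ fun t => Real.log (1 + Real.exp t) :=
  fun t => (hasDerivAt_log_one_add_exp t).differentiableAt

theorem convexOn_log_one_add_exp : ConvexOn ℝ Set.univ fun t => Real.log (1 + Real.exp t) := by
  refine Monotone.convexOn_univ_of_deriv differentiable_log_one_add_exp ?_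
  rw [funext fun t => (hasDerivAt_log_one_add_exp t).deriv]
  exact Real.sigmoid_monotone

theorem convexOn_sum {𝕜 E β ι : Type*} [Semiring 𝕜] [PartialOrder 𝕜] [AddCommMonoid E]
    [AddCommMonoid β] [PartialOrder β] [IsOrderedAddMonoid β] [SMul 𝕜 E] [Module 𝕜 β]
    {S : Set E} (hS : Convex 𝕜 S) {t : Finset ι} {f : ι → E → β}
    (hf : ∀ i ∈ t, ConvexOn 𝕜 S (f i)) : ConvexOn 𝕜 S fun x => ∑ i ∈ t, f i x := by
  simpa only [← Finset.sum_apply] using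
    Finset.sum_induction f (ConvexOn 𝕜 S) (fun _ _ => ConvexOn.add) (convexOn_const 0 hS) hf

section LogisticLoss

variable {ι E : Type*} [Fintype ι] [NormedAddCommGroup E] [InnerProductSpace ℝ E]

/-- The logistic loss of the parameter `z` for the sample vectors `x i`, averaged over the samples;
the labels `y i` may be arbitrary real numbers. -/
noncomputable def logisticLoss (x : ι → E) (y : ι → ℝ) (z : E) : ℝ :=
  (1 / (Fintype.card ι : ℝ)) * ∑ i, (Real.log (1 + Real.exp ⟪x i, z⟫) - y i * ⟪x i, z⟫)

theorem differentiable_logisticLoss (x : ι → E) (y : ι → ℝ) :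
    Differentiable ℝ (logisticLoss x y) := by
  have hinner (i : ι) : Differentiable ℝ fun z => ⟪x i, z⟫ := (innerSL ℝ (x i)).differentiable
  exact (Differentiable.fun_sum fun i _ =>
    (differentiable_log_one_add_exp.comp (hinner i)).sub ((hinner i).const_mul (y i))).const_mul _

theorem convexOn_logisticLoss (x : ι → E) (y : ι → ℝ) :
    ConvexOn ℝ Set.univ (logisticLoss x y) := by
  have hterm (i : ι) :
      ConvexOn ℝ Set.univ fun z => Real.log (1 + Real.exp ⟪x i, z⟫) - y i * ⟪x i, z⟫ :=
    (convexOn_log_one_add_exp.comp_linearMap (innerₛₗ ℝ (x i))).sub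
      ((y i • innerₛₗ ℝ (x i)).concaveOn convex_univ)
  exact (convexOn_sum convex_univ fun i _ => hterm i).smul (by positivity)

end LogisticLoss

theorem strong_stationary_small_support_global_minimizer_general {p s : ℕ}
    {f : EuclideanSpace ℝ (Fin p) → ℝ} (hf : ConvexOn ℝ Set.univ f)
    {z : EuclideanSpace ℝ (Fin p)} (hdiff : DifferentiableAt ℝ f z) {τ : ℝ} (hτ : τ ≠ 0)
    (hz : z ∈ projS s (z - τ • gradient f z)) (hcard : norm0 z < s) : IsMinOn f Set.univ z :=
  isMinOn_of_convexOn_of_gradient_eq_zero hf hdiff (gradient_eq_zero_of_mem_projS hτ hz hcard)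
    (Set.mem_univ z)

/-- a strong τ-stationary point `z*` with `‖z*‖₀ < s` is a global
minimizer of ℓ over S. -/
theorem strong_stationary_small_support_global_minimizer (n p s : ℕ)
    (hn : 0 < n) (hs : 0 < s) (hsp : s < p)
    (X : Matrix (Fin n) (Fin p) ℝ) (y : Fin n → ℝ)
    (hy : ∀ i, y i = 0 ∨ y i = 1)
    (ℓ : EuclideanSpace ℝ (Fin p) → ℝ)
    (hℓ : ∀ z, ℓ z = (1 / (n : ℝ)) *
      ∑ i, (Real.log (1 + Real.exp (∑ j, X i j * z j)) - y i * (∑ j, X i j * z j)))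
    (τ : ℝ) (hτ : 0 < τ) (zs : EuclideanSpace ℝ (Fin p))
    (hstat : projS s (zs - τ • gradient ℓ zs) = {zs})
    (hcard : norm0 zs < s) :
    ∀ z : EuclideanSpace ℝ (Fin p), norm0 z ≤ s → ℓ zs ≤ ℓ z := by
  obtain rfl : ℓ = logisticLoss (fun i => WithLp.toLp 2 (X i)) y :=
    funext fun z => by simp [hℓ, logisticLoss, PiLp.inner_apply, mul_comm]
  exact fun z _ => strong_stationary_small_support_global_minimizer_general
    (convexOn_logisticLoss _ y) (differentiable_logisticLoss _ y zs) hτ.ne' (by simp [hstat])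
    hcard (Set.mem_univ z)
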